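/- Suppose Assumption (Coefficients) holds, that c, f, φ ∈ C(ℝⁿ) with c(x) ≥ c₀ for all x ∈ ℝⁿ for some constant c₀ > 0, and that lim_{y→0} F(x,y) = 0 for every x ∈ ℝⁿ. If u is a bounded viscosity subsolution and v is a bounded viscosity supersolution of the stationary obstacle problem min{−Lw + c w − f, w − φ} = 0 on ℝⁿ, then u(x) ≤ v(x) for all x ∈ ℝⁿ. -/

import Mathlib

/-!
The proof doubles variables. Suppose `u(x) > v(x)` somewhere and maximise
`u(a) - v(d) - j g(a - d) - δ ψ(a)` with `g(z) = √(1+|z|²) - 1` (`pen`) and `ψ(a) = log(1+|a|²)`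
(`logpen`), both of which have bounded first and second derivatives. At a maximum point `(x, y)`
the smooth penalties touch `u` from above and `v` from below.

* Test functions between `u` and the touching penalty, decreasing to `u`, allow `u` itself to be
  put into the nonlocal term (`le_integral_of_touching`, by Fatou's lemma), and likewise for `v`.
* Subtracting the two inequalities and using maximality under simultaneous jumps
  `(x + F(x,z), y + F(y,z))`, the nonlocal terms are bounded by
  `j ∫|F(x,z) - F(y,z)|² ν(dz) ≤ K j |x - y|²` plus `O(δ)` (`doubling_estimate`). The decay of
  `D²ψ` is what makes the second contribution uniform in `x`.
* As `j → ∞` the maximum points converge along a subsequence to a common limit `a` with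
  `j|x - y|² → 0`, so continuity of `c`, `f`, `φ` on compact sets suffices. The obstacle is inactive
  for `u`, and in the limit `c₀ m ≤ δ C`, with `m > 0` a lower bound for the maxima and `C`
  independent of `δ`; this is false for small `δ`
  (`comparison_of_integrable`).

The open ball in the bound on `F` by `ρ` does not force `∫|F(x,y)|² ν(dy) < ∞`, so the integral
in `L` may diverge. By the Lipschitz condition on `F`, `g(F(x,·))` is `ν`-integrable either for
every `x` or for no `x`. In the first case every test function has an integrable second difference
and the argument above applies. In the second case, adding a suitable multiple of `g(· - x₀)` to a
test function makes the integrand non-integrable, hence its Bochner integral `0`, without changing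
the gradient at `x₀`; so `u` and `v` are a sub- and a supersolution of the
first-order problem, which is the case `ν = 0` of the same comparison argument.
-/

open MeasureTheory
open scoped RealInnerProductSpace ENNReal

noncomputable section

/-- `ℝⁿ` with the Euclidean inner product and norm. -/
abbrev En (n : ℕ) := EuclideanSpace ℝ (Fin n)

/-- Test functions: `C²` functions with bounded first and second derivatives. -/
def IsTestFn {n : ℕ} (u : En n → ℝ) : Prop :=
  ContDiff ℝ 2 u ∧ (∃ M, ∀ x, ‖fderiv ℝ u x‖ ≤ M) ∧ (∃ M, ∀ x, ‖fderiv ℝ (fderiv ℝ u) x‖ ≤ M)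

/-- The nonlocal operator
`Lu(x) = b(x)·∇u(x) + ∫_{ℝⁿ\{0}} (u(x + F(x,y)) − u(x) − ∇u(x)·F(x,y)) ν(dy)`. -/
def Lop {n : ℕ} (ν : Measure (En n)) (F : En n → En n → En n) (b : En n → En n)
    (u : En n → ℝ) (x : En n) : ℝ :=
  ⟪b x, gradient u x⟫ +
    ∫ y in {(0 : En n)}ᶜ, (u (x + F x y) - u x - ⟪gradient u x, F x y⟫) ∂ν

/-- Assumption (Coefficients): there are `K > 0` and a measurable `ρ : ℝⁿ → [0,∞)` such that
(i) `∫ |F(x₁,y) − F(x₂,y)|² ν(dy) ≤ K|x₁ − x₂|²`;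
(ii) `sup_{z ∈ B(0,|y|)} |F(x,z)| ≤ ρ(y)` and `∫ (max(|y|, ρ(y)))² ν(dy) ≤ K`;
(iii) `b` is bounded and Lipschitz. -/
def CoefficientsAssumption {n : ℕ} (ν : Measure (En n)) (F : En n → En n → En n)
    (b : En n → En n) (ρ : En n → ℝ) (K : ℝ) : Prop :=
  0 < K ∧
  Measurable (Function.uncurry F) ∧ Measurable ρ ∧ (∀ y, 0 ≤ ρ y) ∧
  (∀ x₁ x₂ : En n,
    ∫⁻ y in {(0 : En n)}ᶜ, ENNReal.ofReal (‖F x₁ y - F x₂ y‖ ^ 2) ∂ν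
      ≤ ENNReal.ofReal (K * ‖x₁ - x₂‖ ^ 2)) ∧
  (∀ x y : En n, ∀ z ∈ Metric.ball (0 : En n) ‖y‖, ‖F x z‖ ≤ ρ y) ∧
  (∫⁻ y in {(0 : En n)}ᶜ, ENNReal.ofReal ((max ‖y‖ (ρ y)) ^ 2) ∂ν ≤ ENNReal.ofReal K) ∧
  (∃ M, ∀ x, ‖b x‖ ≤ M) ∧ (∃ β : NNReal, LipschitzWith β b)

/-- A bounded continuous `v` is a viscosity subsolution of
`min{−Lv + c v − f, v − φ} = 0` on `ℝⁿ`. -/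
def IsViscositySubsolution {n : ℕ} (ν : Measure (En n)) (F : En n → En n → En n)
    (b : En n → En n) (c f φ : En n → ℝ) (v : En n → ℝ) : Prop :=
  Continuous v ∧ (∃ M, ∀ x, |v x| ≤ M) ∧
  ∀ u : En n → ℝ, IsTestFn u → ∀ x₀ : En n,
    (∀ x, v x - u x ≤ v x₀ - u x₀) → u x₀ = v x₀ →
    min (-(Lop ν F b u x₀) + c x₀ * u x₀ - f x₀) (u x₀ - φ x₀) ≤ 0

/-- A bounded continuous `v` is a viscosity supersolution of
`min{−Lv + c v − f, v − φ} = 0` on `ℝⁿ`. -/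
def IsViscositySupersolution {n : ℕ} (ν : Measure (En n)) (F : En n → En n → En n)
    (b : En n → En n) (c f φ : En n → ℝ) (v : En n → ℝ) : Prop :=
  Continuous v ∧ (∃ M, ∀ x, |v x| ≤ M) ∧
  ∀ u : En n → ℝ, IsTestFn u → ∀ x₀ : En n,
    (∀ x, v x₀ - u x₀ ≤ v x - u x) → u x₀ = v x₀ →
    0 ≤ min (-(Lop ν F b u x₀) + c x₀ * u x₀ - f x₀) (u x₀ - φ x₀)

section

-- Needed to find the norm on the second derivatives, in `En n →L[ℝ] En n →L[ℝ] ℝ`.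
set_option maxSynthPendingDepth 3

/-! ### Test functions -/

lemma IsTestFn.diff {n : ℕ} {u : En n → ℝ} (hu : IsTestFn u) : Differentiable ℝ u :=
  hu.1.differentiable (by norm_num)

lemma IsTestFn.diff_fderiv {n : ℕ} {u : En n → ℝ} (hu : IsTestFn u) :
    Differentiable ℝ (fderiv ℝ u) :=
  (hu.1.fderiv_right (m := 1) (by norm_num)).differentiable (by norm_num)

lemma IsTestFn.add {n : ℕ} {u w : En n → ℝ} (hu : IsTestFn u) (hw : IsTestFn w) :
    IsTestFn (fun x => u x + w x) := by
  have e1 : fderiv ℝ (fun x => u x + w x) = fun x => fderiv ℝ u x + fderiv ℝ w x :=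
    funext fun x => fderiv_fun_add (hu.diff x) (hw.diff x)
  obtain ⟨M1, h1⟩ := hu.2.1
  obtain ⟨M2, h2⟩ := hw.2.1
  obtain ⟨N1, k1⟩ := hu.2.2
  obtain ⟨N2, k2⟩ := hw.2.2
  refine ⟨hu.1.add hw.1, ⟨M1 + M2, fun x => ?_⟩, ⟨N1 + N2, fun x => ?_⟩⟩
  · rw [e1]
    exact (norm_add_le _ _).trans (add_le_add (h1 x) (h2 x))
  · rw [e1, fderiv_fun_add (hu.diff_fderiv x) (hw.diff_fderiv x)]
    exact (norm_add_le _ _).trans (add_le_add (k1 x) (k2 x))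

lemma IsTestFn.const_mul {n : ℕ} {u : En n → ℝ} (hu : IsTestFn u) (a : ℝ) :
    IsTestFn (fun x => a * u x) := by
  have e1 : fderiv ℝ (fun x => a * u x) = fun x => a • fderiv ℝ u x :=
    funext fun x => fderiv_const_mul (hu.diff x) a
  obtain ⟨M1, h1⟩ := hu.2.1
  obtain ⟨N1, k1⟩ := hu.2.2
  refine ⟨contDiff_const.mul hu.1, ⟨|a| * M1, fun x => ?_⟩, ⟨|a| * N1, fun x => ?_⟩⟩
  · rw [e1, norm_smul, Real.norm_eq_abs]
    exact mul_le_mul_of_nonneg_left (h1 x) (abs_nonneg a)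
  · rw [e1, fderiv_fun_const_smul (hu.diff_fderiv x), norm_smul, Real.norm_eq_abs]
    exact mul_le_mul_of_nonneg_left (k1 x) (abs_nonneg a)

lemma IsTestFn.const {n : ℕ} (a : ℝ) : IsTestFn (fun _ : En n => a) := by
  have e1 : fderiv ℝ (fun _ : En n => a) = fun _ => 0 := funext fun x => by simp
  refine ⟨contDiff_const, ⟨0, fun x => by simp⟩, ⟨0, fun x => ?_⟩⟩
  rw [e1]
  simp

lemma IsTestFn.neg {n : ℕ} {u : En n → ℝ} (hu : IsTestFn u) : IsTestFn (fun x => - u x) := by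
  simpa using hu.const_mul (-1)

lemma IsTestFn.comp_sub {n : ℕ} {u : En n → ℝ} (hu : IsTestFn u) (a : En n) :
    IsTestFn (fun x => u (x - a)) := by
  have e1 : fderiv ℝ (fun x => u (x - a)) = fun x => fderiv ℝ u (x - a) :=
    funext fun x => fderiv_comp_sub a
  obtain ⟨M1, h1⟩ := hu.2.1
  obtain ⟨N1, k1⟩ := hu.2.2
  refine ⟨hu.1.comp (contDiff_id.sub contDiff_const), ⟨M1, fun x => ?_⟩, ⟨N1, fun x => ?_⟩⟩
  · rw [e1]
    exact h1 _
  · rw [e1, fderiv_comp_sub (f := fderiv ℝ u) a]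
    exact k1 _

lemma IsTestFn.of_compactSupport {n : ℕ} {u : En n → ℝ} (hu : ContDiff ℝ 2 u)
    (hs : HasCompactSupport u) : IsTestFn u := by
  have h1 : ContDiff ℝ 1 (fderiv ℝ u) := hu.fderiv_right (m := 1) (by norm_num)
  have s1 : HasCompactSupport (fderiv ℝ u) := hs.fderiv ℝ
  exact ⟨hu, h1.continuous.bounded_above_of_compact_support s1,
    (h1.continuous_fderiv (by norm_num)).bounded_above_of_compact_support (s1.fderiv ℝ)⟩

/-! ### Radial functions and the two penalties -/

lemma norm_sq_hasFDerivAt {n : ℕ} (x : En n) :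
    HasFDerivAt (fun x : En n => ‖x‖ ^ 2) ((2 : ℝ) • innerSL ℝ x) x := by
  have := (hasStrictFDerivAt_norm_sq x).hasFDerivAt
  convert! this using 1
  ext y
  simp

/-- The chain rule for a radial function `x ↦ h(|x|²)`: gradient `2h'(|x|²)x`. -/
lemma radial_hasFDerivAt {n : ℕ} {h h' : ℝ → ℝ}
    (hd : ∀ t, 0 ≤ t → HasDerivAt h (h' t) t) (x : En n) :
    HasFDerivAt (fun x : En n => h (‖x‖ ^ 2)) ((2 * h' (‖x‖ ^ 2)) • innerSL ℝ x) x := by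
  have h1 := (hd (‖x‖ ^ 2) (by positivity)).comp_hasFDerivAt x (norm_sq_hasFDerivAt x)
  convert! h1 using 1
  rw [smul_smul, mul_comm]

/-- A radial function `h(|x|²)` is a test function as soon as `2|h'(r²)|r` and
`2|h'(r²)| + 4|h''(r²)|r²` are bounded. -/
lemma radial_isTestFn {n : ℕ} {h h' h'' : ℝ → ℝ} (B : ℝ)
    (hd : ∀ t, 0 ≤ t → HasDerivAt h (h' t) t)
    (hd' : ∀ t, 0 ≤ t → HasDerivAt h' (h'' t) t)
    (hC : ContDiff ℝ 2 (fun x : En n => h (‖x‖ ^ 2)))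
    (hB1 : ∀ r, 0 ≤ r → 2 * |h' (r ^ 2)| * r ≤ B)
    (hB2 : ∀ r, 0 ≤ r → 2 * |h' (r ^ 2)| + 4 * |h'' (r ^ 2)| * r ^ 2 ≤ B) :
    IsTestFn (fun x : En n => h (‖x‖ ^ 2)) := by
  have e1 : fderiv ℝ (fun x : En n => h (‖x‖ ^ 2))
      = fun x => (2 * h' (‖x‖ ^ 2)) • innerSL ℝ x :=
    funext fun x => (radial_hasFDerivAt hd x).fderiv
  refine ⟨hC, ⟨B, fun x => ?_⟩, ⟨B, fun x => ?_⟩⟩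
  · rw [e1]
    simp only [norm_smul, innerSL_apply_norm, norm_mul, Real.norm_eq_abs, abs_two]
    exact hB1 _ (norm_nonneg x)
  · rw [e1]
    have h1 : HasFDerivAt (fun x : En n => (2 * h' (‖x‖ ^ 2)) • innerSL ℝ x) _ x :=
      ((radial_hasFDerivAt hd' x).const_mul 2).smul (innerSL ℝ (E := En n)).hasFDerivAt
    rw [h1.fderiv]
    refine le_trans (norm_add_le _ _) (le_trans ?_ (hB2 _ (norm_nonneg x)))
    refine add_le_add ?_ ?_
    · rw [norm_smul, norm_mul, Real.norm_eq_abs, Real.norm_eq_abs, abs_two]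
      exact mul_le_of_le_one_right (by positivity) (norm_innerSL_le ℝ)
    · rw [ContinuousLinearMap.norm_smulRight_apply]
      simp only [norm_smul, innerSL_apply_norm, norm_mul, Real.norm_eq_abs, abs_two]
      apply le_of_eq
      ring

/-- The smooth penalty `g(z) = √(1+|z|²) − 1`, comparable to `min(|z|², |z|)`. -/
def pen {n : ℕ} (z : En n) : ℝ := √(1 + ‖z‖ ^ 2) - 1

/-- The penalty at infinity `ψ(x) = log(1+|x|²)`. -/
def logpen {n : ℕ} (x : En n) : ℝ := Real.log (1 + ‖x‖ ^ 2)

lemma pen_isTestFn {n : ℕ} : IsTestFn (pen : En n → ℝ) := by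
  have hpos : ∀ t : ℝ, 0 ≤ t → 0 < √(1 + t) := fun t ht => Real.sqrt_pos.2 (by linarith)
  refine radial_isTestFn (h := fun t => √(1 + t) - 1) (h' := fun t => 1 / (2 * √(1 + t)))
    (h'' := fun t => - (1 / (4 * (1 + t) * √(1 + t)))) 2 ?_ ?_ ?_ ?_ ?_
  · intro t ht
    have := (((hasDerivAt_id t).const_add 1).sqrt (by simp; linarith)).sub_const 1
    simpa using this
  · intro t ht
    have h0 := hpos t ht
    have := ((((hasDerivAt_id t).const_add 1).sqrt (by simp; linarith)).const_mul 2).fun_inv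
      (by simp; exact h0.ne')
    convert! this using 1
    · ext s; simp
    · have hs : √(1 + t) ^ 2 = 1 + t := Real.sq_sqrt (by linarith)
      simp only [id]
      rw [← hs]
      simp only [Real.sqrt_sq h0.le]
      field_simp
      norm_num
  · exact (((contDiff_const.add (contDiff_norm_sq ℝ)).sqrt
      (fun x => by positivity)).sub contDiff_const)
  · intro r hr
    have h0 := hpos (r ^ 2) (by positivity)
    have h1 : r ≤ √(1 + r ^ 2) := Real.le_sqrt_of_sq_le (by linarith)
    rw [abs_of_pos (by positivity)]
    field_simp
    linarith
  · intro r hr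
    have h0 := hpos (r ^ 2) (by positivity)
    have h2 : 1 ≤ √(1 + r ^ 2) := Real.le_sqrt_of_sq_le (by nlinarith)
    rw [abs_neg, abs_of_pos (by positivity), abs_of_pos (by positivity)]
    field_simp
    nlinarith

lemma logpen_isTestFn {n : ℕ} : IsTestFn (logpen : En n → ℝ) := by
  refine radial_isTestFn (h := fun t => Real.log (1 + t)) (h' := fun t => 1 / (1 + t))
    (h'' := fun t => - (1 / (1 + t) ^ 2)) 6 ?_ ?_ ?_ ?_ ?_
  · intro t ht
    have := ((hasDerivAt_id t).const_add 1).log (by simp; linarith)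
    simpa using this
  · intro t ht
    have := ((hasDerivAt_id t).const_add 1).fun_inv (by simp; linarith)
    convert! this using 1
    · ext s; simp
    · simp only [id]
      field_simp
  · exact (contDiff_const.add (contDiff_norm_sq ℝ)).log (fun x => by positivity)
  · intro r hr
    rw [abs_of_pos (by positivity)]
    field_simp
    nlinarith [sq_nonneg (r - 1)]
  · intro r hr
    rw [abs_neg, abs_of_pos (by positivity), abs_of_pos (by positivity)]
    field_simp
    nlinarith [sq_nonneg r, sq_nonneg (r ^ 2)]

lemma pen_fderiv {n : ℕ} (z h : En n) :
    fderiv ℝ pen z h = ⟪z, h⟫ / √(1 + ‖z‖ ^ 2) := by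
  have := radial_hasFDerivAt (h := fun t => √(1 + t) - 1) (h' := fun t => 1 / (2 * √(1 + t)))
    (fun t ht => by
      have := (((hasDerivAt_id t).const_add 1).sqrt (by simp; linarith)).sub_const 1
      simpa using this) z
  change HasFDerivAt pen _ z at this
  have h0 : 0 < √(1 + ‖z‖ ^ 2) := Real.sqrt_pos.2 (by positivity)
  rw [this.fderiv]
  simp
  field_simp

lemma logpen_fderiv {n : ℕ} (x h : En n) :
    fderiv ℝ logpen x h = 2 * ⟪x, h⟫ / (1 + ‖x‖ ^ 2) := by
  have := radial_hasFDerivAt (h := fun t => Real.log (1 + t)) (h' := fun t => 1 / (1 + t))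
    (fun t ht => by
      have := ((hasDerivAt_id t).const_add 1).log (by simp; linarith)
      simpa using this) x
  change HasFDerivAt logpen _ x at this
  rw [this.fderiv]
  simp
  field_simp

lemma pen_nonneg {n : ℕ} (z : En n) : 0 ≤ pen z := by
  have : 1 ≤ √(1 + ‖z‖ ^ 2) := Real.le_sqrt_of_sq_le (by nlinarith [norm_nonneg z])
  unfold pen; linarith

lemma pen_zero {n : ℕ} : pen (0 : En n) = 0 := by simp [pen]

lemma pen_neg {n : ℕ} (z : En n) : pen (-z) = pen z := by simp [pen]

lemma norm_sq_eq_pen {n : ℕ} (z : En n) : ‖z‖ ^ 2 = pen z * (pen z + 2) := by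
  have : √(1 + ‖z‖ ^ 2) ^ 2 = 1 + ‖z‖ ^ 2 := Real.sq_sqrt (by positivity)
  unfold pen; linarith [this]

lemma pen_le_sq {n : ℕ} (z : En n) : pen z ≤ ‖z‖ ^ 2 := by
  nlinarith [norm_sq_eq_pen z, pen_nonneg z]

lemma pen_fderiv_zero {n : ℕ} : fderiv ℝ pen (0 : En n) = 0 := by
  ext h; simp [pen_fderiv]

/-- `g ≳ min(|z|², |z|)`. -/
lemma min_le_pen {n : ℕ} (z : En n) : min (‖z‖ ^ 2) ‖z‖ ≤ 3 * pen z := by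
  have h1 := norm_sq_eq_pen z
  have h2 := pen_nonneg z
  have h3 := norm_nonneg z
  by_cases h : ‖z‖ ≤ 1
  · refine (min_le_left _ _).trans ?_
    have : pen z ≤ 1 := (pen_le_sq z).trans (by nlinarith)
    nlinarith
  · refine (min_le_right _ _).trans ?_
    push Not at h
    by_contra hc
    push Not at hc
    nlinarith

/-- Second-order bound for the penalty, from concavity of the square root. -/
lemma pen_taylor {n : ℕ} (z h : En n) :
    pen (z + h) - pen z - fderiv ℝ pen z h ≤ ‖h‖ ^ 2 := by
  rw [pen_fderiv]
  have e : ‖z + h‖ ^ 2 = ‖z‖ ^ 2 + 2 * ⟪z, h⟫ + ‖h‖ ^ 2 := norm_add_sq_real z h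
  unfold pen
  set s := √(1 + ‖z‖ ^ 2)
  set t := √(1 + ‖z + h‖ ^ 2)
  have hs : s ^ 2 = 1 + ‖z‖ ^ 2 := Real.sq_sqrt (by positivity)
  have ht : t ^ 2 = 1 + ‖z + h‖ ^ 2 := Real.sq_sqrt (by positivity)
  have hs1 : 1 ≤ s := Real.le_sqrt_of_sq_le (by nlinarith [norm_nonneg z])
  have hs0 : 0 < s := by linarith
  have : t - s - ⟪z, h⟫ / s = (2 * s * t - 2 * s ^ 2 - 2 * ⟪z, h⟫) / (2 * s) := by field_simp
  have h4 : t - 1 - (s - 1) - ⟪z, h⟫ / s = (2 * s * t - 2 * s ^ 2 - 2 * ⟪z, h⟫) / (2 * s) := by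
    rw [← this]; ring
  rw [h4, div_le_iff₀ (by positivity)]
  nlinarith [sq_nonneg (s - t), sq_nonneg ‖h‖]

/-- Second-order bound for the logarithmic penalty, from concavity of the logarithm; the decay in
`x` compensates the possible quadratic growth of `∫|F(x,y)|²ν(dy)`. -/
lemma logpen_taylor {n : ℕ} (x h : En n) :
    logpen (x + h) - logpen x - fderiv ℝ logpen x h ≤ ‖h‖ ^ 2 / (1 + ‖x‖ ^ 2) := by
  rw [logpen_fderiv]
  have e : ‖x + h‖ ^ 2 = ‖x‖ ^ 2 + 2 * ⟪x, h⟫ + ‖h‖ ^ 2 := norm_add_sq_real x h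
  unfold logpen
  have h1 := Real.log_le_sub_one_of_pos
    (show 0 < (1 + ‖x + h‖ ^ 2) / (1 + ‖x‖ ^ 2) by positivity)
  rw [Real.log_div (by positivity) (by positivity)] at h1
  have : (1 + ‖x + h‖ ^ 2) / (1 + ‖x‖ ^ 2) - 1
    = 2 * ⟪x, h⟫ / (1 + ‖x‖ ^ 2) + ‖h‖ ^ 2 / (1 + ‖x‖ ^ 2) := by
    rw [e]; field_simp; ring
  linarith

lemma logpen_nonneg {n : ℕ} (x : En n) : 0 ≤ logpen x :=
  Real.log_nonneg (by nlinarith [norm_nonneg x])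

lemma norm_fderiv_logpen {n : ℕ} (x h : En n) : |fderiv ℝ logpen x h| ≤ ‖h‖ := by
  rw [logpen_fderiv, abs_div, abs_mul, abs_two, abs_of_pos (show 0 < 1 + ‖x‖ ^ 2 by positivity),
    div_le_iff₀ (by positivity)]
  have := abs_real_inner_le_norm x h
  nlinarith [norm_nonneg h, norm_nonneg x, sq_nonneg (‖x‖ - 1),
    mul_nonneg (norm_nonneg h) (sq_nonneg (‖x‖ - 1))]

lemma norm_fderiv_pen {n : ℕ} (z h : En n) : |fderiv ℝ pen z h| ≤ ‖z‖ * ‖h‖ := by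
  have hs1 : 1 ≤ √(1 + ‖z‖ ^ 2) := Real.le_sqrt_of_sq_le (by nlinarith [norm_nonneg z])
  rw [pen_fderiv, abs_div, abs_of_nonneg (by linarith : 0 ≤ √(1 + ‖z‖ ^ 2))]
  exact (div_le_self (abs_nonneg _) hs1).trans (abs_real_inner_le_norm z h)

lemma logpen_taylor' {n : ℕ} (x h : En n) :
    logpen (x + h) - logpen x - fderiv ℝ logpen x h ≤ 2 * ‖h‖ := by
  have h1 : ‖logpen (x + h) - logpen x‖ ≤ 1 * ‖x + h - x‖ := by
    refine Convex.norm_image_sub_le_of_norm_fderiv_le (𝕜 := ℝ) (s := Set.univ)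
      (fun y _ => logpen_isTestFn.diff y) (fun y _ => ?_) convex_univ trivial trivial
    exact ContinuousLinearMap.opNorm_le_bound _ zero_le_one fun h => by
      simpa using norm_fderiv_logpen y h
  have h2 := norm_fderiv_logpen x h
  simp only [add_sub_cancel_left, one_mul, Real.norm_eq_abs] at h1
  linarith [(abs_le.1 h1).2, (abs_le.1 h2).1]

/-- Bound for the second difference of `ψ` by a jump `h = F(x,z)`, compared with `h0 = F(0,z)`: its
`ν`-integral is bounded uniformly in `x` since `∫|F(x,z) - F(0,z)|² ν(dz) ≤ K|x|²`. -/
lemma logpen_taylor_split {n : ℕ} (x h h0 : En n) :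
    logpen (x + h) - logpen x - fderiv ℝ logpen x h
      ≤ 4 * (‖h - h0‖ ^ 2 / (1 + ‖x‖ ^ 2)) + 12 * pen h0 := by
  have h1 := logpen_taylor x h
  have h2 := logpen_taylor' x h
  have htri : ‖h‖ ≤ ‖h - h0‖ + ‖h0‖ := by simpa using norm_add_le (h - h0) h0
  have hp := pen_nonneg h0
  have hm := min_le_pen h0
  have hD : ∀ a : ℝ, 0 ≤ a → 0 ≤ a / (1 + ‖x‖ ^ 2) := fun a ha => by positivity
  by_cases hc : ‖h0‖ ≤ ‖h - h0‖
  · have : ‖h‖ ^ 2 / (1 + ‖x‖ ^ 2) ≤ 4 * (‖h - h0‖ ^ 2 / (1 + ‖x‖ ^ 2)) := by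
      rw [← mul_div_assoc]
      gcongr
      nlinarith [norm_nonneg h]
    linarith
  · push Not at hc
    have hh : ‖h‖ ≤ 2 * ‖h0‖ := by linarith
    have h3 : ‖h‖ ^ 2 / (1 + ‖x‖ ^ 2) ≤ 4 * ‖h0‖ ^ 2 := by
      refine (div_le_self (sq_nonneg _) (by nlinarith [norm_nonneg x])).trans ?_
      nlinarith [norm_nonneg h]
    have h4 := hD (‖h - h0‖ ^ 2) (sq_nonneg _)
    rcases min_le_iff.1 hm with h5 | h5 <;> linarith

lemma pen_add_le {n : ℕ} (a d : En n) : pen (a + d) ≤ 12 * pen a + 4 * ‖d‖ ^ 2 := by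
  have hp := pen_nonneg a
  have htri : ‖a + d‖ ≤ ‖a‖ + ‖d‖ := norm_add_le a d
  have h1 := pen_le_sq (a + d)
  have h2 : pen (a + d) ≤ ‖a + d‖ := by
    have h1 := norm_sq_eq_pen (a + d)
    have h2 := pen_nonneg (a + d)
    nlinarith [norm_nonneg (a + d)]
  have hm := min_le_pen a
  by_cases hc : ‖a‖ ≤ ‖d‖
  · nlinarith [norm_nonneg (a + d)]
  · push Not at hc
    rcases min_le_iff.1 hm with h5 | h5 <;> nlinarith [norm_nonneg (a + d), norm_nonneg d]

/-- The second difference of a test function is dominated by the penalty `g`. -/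
lemma IsTestFn.taylor {n : ℕ} {w : En n → ℝ} (hw : IsTestFn w) :
    ∃ C, 0 ≤ C ∧ ∀ x h, |w (x + h) - w x - fderiv ℝ w x h| ≤ C * pen h := by
  obtain ⟨M1, h1⟩ := hw.2.1
  obtain ⟨N1, k1⟩ := hw.2.2
  have hM : 0 ≤ M1 := (norm_nonneg _).trans (h1 0)
  have hN : 0 ≤ N1 := (norm_nonneg _).trans (k1 0)
  have lin : ∀ x h, |w (x + h) - w x - fderiv ℝ w x h| ≤ (2 * M1) * ‖h‖ := by
    intro x h
    have := Convex.norm_image_sub_le_of_norm_fderiv_le' (𝕜 := ℝ) (s := Set.univ)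
      (f := w) (φ := fderiv ℝ w x) (x := x) (y := x + h) (C := 2 * M1)
      (fun y _ => hw.diff y) (fun y _ => (norm_sub_le _ _).trans (by linarith [h1 x, h1 y]))
      convex_univ trivial trivial
    simpa using this
  have quad : ∀ x h, |w (x + h) - w x - fderiv ℝ w x h| ≤ N1 * ‖h‖ ^ 2 := by
    intro x h
    have := Convex.norm_image_sub_le_of_norm_fderiv_le' (𝕜 := ℝ)
      (s := Metric.closedBall x ‖h‖)
      (f := w) (φ := fderiv ℝ w x) (x := x) (y := x + h) (C := N1 * ‖h‖)
      (fun y _ => hw.diff y) (fun y hy => ?_)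
      (convex_closedBall _ _) (by simp) (by simp)
    · simpa [pow_two, mul_assoc] using this
    · have h2 := Convex.norm_image_sub_le_of_norm_fderiv_le (𝕜 := ℝ) (s := Set.univ)
        (f := fderiv ℝ w) (x := x) (y := y) (fun y _ => hw.diff_fderiv y) (fun y _ => k1 y)
        convex_univ trivial trivial
      refine h2.trans (mul_le_mul_of_nonneg_left ?_ hN)
      rwa [mem_closedBall_iff_norm] at hy
  refine ⟨3 * (2 * M1 + N1), by positivity, fun x h => ?_⟩
  have hp := pen_nonneg h
  rcases min_le_iff.1 (min_le_pen h) with h5 | h5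
  · nlinarith [quad x h]
  · nlinarith [lin x h]

/-! ### The nonlocal operator and viscosity inequalities -/

lemma Lop_eq {n : ℕ} (ν : Measure (En n)) (F : En n → En n → En n) (b : En n → En n)
    (w : En n → ℝ) (x : En n) :
    Lop ν F b w x = fderiv ℝ w x (b x) +
      ∫ y in {(0 : En n)}ᶜ, (w (x + F x y) - w x - fderiv ℝ w x (F x y)) ∂ν := by
  unfold Lop gradient
  rw [real_inner_comm]
  simp only [InnerProductSpace.toDual_symm_apply]

lemma Lop_neg {n : ℕ} (ν : Measure (En n)) (F : En n → En n → En n) (b : En n → En n)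
    (w : En n → ℝ) (x : En n) :
    Lop ν F b (fun z => - w z) x = - Lop ν F b w x := by
  rw [Lop_eq, Lop_eq, fderiv_fun_neg, neg_add, ← integral_neg]
  congr 2
  ext y
  simp
  ring

/-- A nonnegative continuous function is a limit from below of nonnegative test functions:
a partition of unity yields a smooth function between `max(q - 1/(k+1), 0)` and `q`, and a cutoff
equal to `1` on a large ball makes it compactly supported. -/
lemma exists_test_below {n : ℕ} {q : En n → ℝ} (hq : Continuous q) (hq0 : ∀ x, 0 ≤ q x)
    (a : En n) (k : ℕ) :
    ∃ s : En n → ℝ, IsTestFn s ∧ (∀ x, 0 ≤ s x) ∧ (∀ x, s x ≤ q x) ∧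
      ∀ x, ‖x - a‖ ≤ k → q x - 1 / (k + 1) ≤ s x := by
  set e : ℝ := 1 / (k + 1) with he
  have hepos : 0 < e := by positivity
  obtain ⟨g, hg⟩ := exists_contMDiffMap_forall_mem_convex_of_local_const
    (I := modelWithCornersSelf ℝ (En n)) (n := 2)
    (t := fun x : En n => Set.Icc (max (q x - e) 0) (q x)) (fun x => convex_Icc _ _) (by
      intro x
      by_cases hx : q x < e
      · refine ⟨0, ?_⟩
        filter_upwards [hq.continuousAt.eventually_lt continuousAt_const hx] with y hy
        exact ⟨max_le (by linarith) le_rfl, hq0 y⟩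
      · push Not at hx
        refine ⟨q x - e / 2, ?_⟩
        have h1 : ∀ᶠ y in nhds x, q y < q x + e / 2 :=
          hq.continuousAt.eventually_lt continuousAt_const (by linarith)
        have h2 : ∀ᶠ y in nhds x, q x - e / 2 < q y :=
          continuousAt_const.eventually_lt hq.continuousAt (by linarith)
        filter_upwards [h1, h2] with y hy1 hy2
        exact ⟨max_le (by linarith) (by linarith), hy2.le⟩)
  let χ : ContDiffBump a := ⟨k + 1, k + 2, by positivity, by linarith⟩
  have hg0 : ∀ x, 0 ≤ g x := fun x => (le_max_right _ _).trans (hg x).1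
  refine ⟨fun x => χ x * g x, ?_, ?_, ?_, ?_⟩
  · refine IsTestFn.of_compactSupport ?_ ?_
    · exact χ.contDiff.mul g.contMDiff.contDiff
    · exact χ.hasCompactSupport.mul_right
  · intro x
    exact mul_nonneg χ.nonneg (hg0 x)
  · intro x
    exact (mul_le_of_le_one_left (hg0 x) χ.le_one).trans (hg x).2
  · intro x hx
    have : χ x = 1 := χ.one_of_mem_closedBall (by
      rw [mem_closedBall_iff_norm]
      change ‖x - a‖ ≤ k + 1
      linarith)
    simp only [this, one_mul]
    exact (le_max_left _ _).trans (hg x).1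

lemma IsTestFn.integrable {n : ℕ} {ν : Measure (En n)} {F : En n → En n → En n} {x : En n}
    (hFm : Measurable (F x))
    (hint : Integrable (fun y => pen (F x y)) (ν.restrict {(0 : En n)}ᶜ))
    {w : En n → ℝ} (hw : IsTestFn w) :
    Integrable (fun y => w (x + F x y) - w x - fderiv ℝ w x (F x y))
      (ν.restrict {(0 : En n)}ᶜ) := by
  obtain ⟨C, hC, hb⟩ := hw.taylor
  refine (hint.const_mul C).mono' ?_ (Filter.Eventually.of_forall fun y => by
    simpa using hb x (F x y))
  refine Measurable.aestronglyMeasurable ?_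
  have h1 : Measurable w := hw.1.continuous.measurable
  have h2 : Measurable (fderiv ℝ w x) := (fderiv ℝ w x).continuous.measurable
  exact ((h1.comp (hFm.const_add x)).sub_const _).sub (h2.comp hFm)

/-- If `A ≤ Lw(x)` for every test function `w ≥ u` touching `u` at `x`, then the same inequality
holds with `u` itself in the integral and the gradient of any such test function `Ψ`. Test
functions between `u` and `Ψ` decrease the nonlocal term to that of `u`, and Fatou's lemma passes
to the limit. -/
lemma le_integral_of_touching {n : ℕ} {ν : Measure (En n)} {F : En n → En n → En n}
    {b : En n → En n} {x : En n} (hFm : Measurable (F x))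
    (hint : Integrable (fun y => pen (F x y)) (ν.restrict {(0 : En n)}ᶜ))
    {u : En n → ℝ} (hu : Continuous u) {A : ℝ}
    (hA : ∀ w, IsTestFn w → (∀ z, u z ≤ w z) → w x = u x → A ≤ Lop ν F b w x)
    {Ψ : En n → ℝ} (hΨ : IsTestFn Ψ) (hle : ∀ z, u z ≤ Ψ z) (heq : Ψ x = u x) :
    Integrable (fun y => u (x + F x y) - u x - fderiv ℝ Ψ x (F x y))
      (ν.restrict {(0 : En n)}ᶜ) ∧
    A ≤ fderiv ℝ Ψ x (b x) +
      ∫ y in {(0 : En n)}ᶜ, (u (x + F x y) - u x - fderiv ℝ Ψ x (F x y)) ∂ν := by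
  set μ := ν.restrict {(0 : En n)}ᶜ
  choose s hs hs0 hsq hsk using fun k : ℕ => exists_test_below (q := fun z => Ψ z - u z)
    (hΨ.1.continuous.sub hu) (fun z => sub_nonneg.2 (hle z)) x k
  have hsx : ∀ k, s k x = 0 := fun k =>
    le_antisymm ((hsq k x).trans (by rw [heq, sub_self])) (hs0 k x)
  have hds : ∀ k, fderiv ℝ (s k) x = 0 := fun k => by
    refine IsLocalMin.fderiv_eq_zero (Filter.Eventually.of_forall fun z => ?_)
    rw [hsx k]
    exact hs0 k z
  have hlim : ∀ z, Filter.Tendsto (fun k => s k z) Filter.atTop (nhds (Ψ z - u z)) := by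
    intro z
    have h1 : Filter.Tendsto (fun k : ℕ => (Ψ z - u z) - 1 / ((k : ℝ) + 1)) Filter.atTop
        (nhds (Ψ z - u z)) := by
      simpa using tendsto_const_nhds.sub (tendsto_one_div_add_atTop_nhds_zero_nat (𝕜 := ℝ))
    refine tendsto_of_tendsto_of_tendsto_of_le_of_le' h1 tendsto_const_nhds ?_
      (Filter.Eventually.of_forall fun k => hsq k z)
    filter_upwards [Filter.eventually_ge_atTop ⌈‖z - x‖⌉₊] with k hk
    exact hsk k z ((Nat.le_ceil _).trans (by exact_mod_cast hk))
  have hJΨ := hΨ.integrable (ν := ν) hFm hint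
  have hJs : ∀ k, Integrable (fun y => s k (x + F x y)) μ := fun k => by
    simpa [hsx, hds] using (hs k).integrable (ν := ν) hFm hint
  set IΨ := ∫ y, (Ψ (x + F x y) - Ψ x - fderiv ℝ Ψ x (F x y)) ∂μ with hIΨ
  have hbound : ∀ k, ∫ y, s k (x + F x y) ∂μ ≤ fderiv ℝ Ψ x (b x) + IΨ - A := by
    intro k
    have hfd : fderiv ℝ (fun z => Ψ z + -1 * s k z) x = fderiv ℝ Ψ x := by
      rw [fderiv_fun_add (hΨ.diff x) ((hs k).const_mul (-1)).diff.differentiableAt,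
        fderiv_const_mul ((hs k).diff x), hds k]
      simp
    have h1 := hA (fun z => Ψ z + -1 * s k z) (hΨ.add ((hs k).const_mul (-1)))
      (fun z => by linarith [hsq k z]) (by simp [hsx k, heq])
    rw [Lop_eq, hfd] at h1
    have h2 : ∫ y, (Ψ (x + F x y) + -1 * s k (x + F x y) - (Ψ x + -1 * s k x)
        - fderiv ℝ Ψ x (F x y)) ∂μ = IΨ - ∫ y, s k (x + F x y) ∂μ := by
      rw [hIΨ, ← integral_sub hJΨ (hJs k)]
      congr 1
      ext y
      rw [hsx k]
      ring
    rw [h2] at h1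
    linarith
  set R := fun y => Ψ (x + F x y) - u (x + F x y) with hR
  have hRm : Measurable R := by
    have h1 : Measurable fun z => Ψ z - u z := (hΨ.1.continuous.sub hu).measurable
    exact h1.comp (hFm.const_add x)
  have hR0 : ∀ y, 0 ≤ R y := fun y => sub_nonneg.2 (hle _)
  have hB0 : 0 ≤ fderiv ℝ Ψ x (b x) + IΨ - A :=
    (integral_nonneg fun y => hs0 0 _).trans (hbound 0)
  have hfatou : ∫⁻ y, ENNReal.ofReal (R y) ∂μ
      ≤ ENNReal.ofReal (fderiv ℝ Ψ x (b x) + IΨ - A) := by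
    have h1 : ∀ y, ENNReal.ofReal (R y)
        = Filter.liminf (fun k => ENNReal.ofReal (s k (x + F x y))) Filter.atTop := fun y =>
      ((ENNReal.continuous_ofReal.tendsto _).comp (hlim (x + F x y))).liminf_eq.symm
    simp_rw [h1]
    refine (lintegral_liminf_le fun k => ?_).trans ?_
    · have h2 : Measurable (s k) := (hs k).1.continuous.measurable
      exact (h2.comp (hFm.const_add x)).ennreal_ofReal
    · refine Filter.liminf_le_of_le (by isBoundedDefault) fun c hc => ?_
      obtain ⟨k, hk⟩ := hc.exists
      refine hk.trans ?_
      rw [← ofReal_integral_eq_lintegral_ofReal (hJs k)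
        (Filter.Eventually.of_forall fun y => hs0 k _)]
      exact ENNReal.ofReal_le_ofReal (hbound k)
  have hRi : Integrable R μ := by
    refine ⟨hRm.aestronglyMeasurable, ?_⟩
    rw [hasFiniteIntegral_iff_ofReal (Filter.Eventually.of_forall hR0)]
    exact hfatou.trans_lt ENNReal.ofReal_lt_top
  have hRle : ∫ y, R y ∂μ ≤ fderiv ℝ Ψ x (b x) + IΨ - A := by
    rw [← ofReal_integral_eq_lintegral_ofReal hRi (Filter.Eventually.of_forall hR0)] at hfatou
    exact (ENNReal.ofReal_le_ofReal_iff hB0).1 hfatou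
  have hfun : (fun y => u (x + F x y) - u x - fderiv ℝ Ψ x (F x y))
      = fun y => (Ψ (x + F x y) - Ψ x - fderiv ℝ Ψ x (F x y)) - R y := by
    ext y
    rw [hR, heq]
    ring
  rw [hfun]
  refine ⟨hJΨ.sub hRi, ?_⟩
  rw [integral_sub hJΨ hRi]
  linarith

/-! ### Doubling of variables -/

lemma sq_diff_integrable {n : ℕ} {μ : Measure (En n)} {F : En n → En n → En n} {K : ℝ}
    (hK : 0 ≤ K) (hFm : ∀ x, Measurable (F x))
    (hF : ∀ x₁ x₂ : En n, ∫⁻ y, ENNReal.ofReal (‖F x₁ y - F x₂ y‖ ^ 2) ∂μ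
      ≤ ENNReal.ofReal (K * ‖x₁ - x₂‖ ^ 2)) (x₁ x₂ : En n) :
    Integrable (fun y => ‖F x₁ y - F x₂ y‖ ^ 2) μ ∧
      ∫ y, ‖F x₁ y - F x₂ y‖ ^ 2 ∂μ ≤ K * ‖x₁ - x₂‖ ^ 2 := by
  have h0 : 0 ≤ᵐ[μ] fun y => ‖F x₁ y - F x₂ y‖ ^ 2 :=
    Filter.Eventually.of_forall fun y => sq_nonneg _
  have hi : Integrable (fun y => ‖F x₁ y - F x₂ y‖ ^ 2) μ := by
    refine ⟨(((hFm x₁).sub (hFm x₂)).norm.pow_const 2).aestronglyMeasurable, ?_⟩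
    rw [hasFiniteIntegral_iff_ofReal h0]
    exact (hF x₁ x₂).trans_lt ENNReal.ofReal_lt_top
  refine ⟨hi, ?_⟩
  have h := hF x₁ x₂
  rw [← ofReal_integral_eq_lintegral_ofReal hi h0] at h
  exact (ENNReal.ofReal_le_ofReal_iff (by positivity)).1 h

/-- The estimate obtained at a maximum point `(x, y)` of the doubled functional
`u(a) - v(d) - j g(a - d) - δ ψ(a)`, from test-function inequalities for `u` at `x` and for `-v`
at `y`. -/
lemma doubling_estimate {n : ℕ} {ν : Measure (En n)} {F : En n → En n → En n}
    {b : En n → En n} {K Mb : ℝ} {β : NNReal} (hK : 0 ≤ K) (hFm : ∀ x, Measurable (F x))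
    (hF : ∀ x₁ x₂ : En n,
      ∫⁻ y in {(0 : En n)}ᶜ, ENNReal.ofReal (‖F x₁ y - F x₂ y‖ ^ 2) ∂ν
        ≤ ENNReal.ofReal (K * ‖x₁ - x₂‖ ^ 2))
    (hint : ∀ x, Integrable (fun y => pen (F x y)) (ν.restrict {(0 : En n)}ᶜ))
    (hMb : ∀ x, ‖b x‖ ≤ Mb) (hβ : LipschitzWith β b)
    {u v : En n → ℝ} (hu : Continuous u) (hv : Continuous v) {j δ : ℝ} (hj : 0 ≤ j) (hδ : 0 ≤ δ)
    {x y : En n}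
    (hmax : ∀ a d, u a - v d - j * pen (a - d) - δ * logpen a
      ≤ u x - v y - j * pen (x - y) - δ * logpen x) {A B : ℝ}
    (hA : ∀ w, IsTestFn w → (∀ z, u z ≤ w z) → w x = u x → A ≤ Lop ν F b w x)
    (hB : ∀ w, IsTestFn w → (∀ z, - v z ≤ w z) → w y = - v y → B ≤ Lop ν F b w y) :
    A + B ≤ (β + K) * (j * ‖x - y‖ ^ 2)
      + δ * (Mb + 4 * K + 12 * ∫ z in {(0 : En n)}ᶜ, pen (F 0 z) ∂ν) := by
  have hp : ∀ a d : En n, pen (a - d) = pen (d - a) := fun a d => by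
    rw [← pen_neg, neg_sub]
  have tp : ∀ a : En n, IsTestFn (fun z => j * pen (z - a)) := fun a =>
    (pen_isTestFn.comp_sub a).const_mul j
  have fp : ∀ a z : En n, fderiv ℝ (fun z => j * pen (z - a)) z = j • fderiv ℝ pen (z - a) :=
    fun a z => by
      rw [fderiv_const_mul ((pen_isTestFn.comp_sub a).diff z), fderiv_comp_sub]
  have tl : IsTestFn (fun z : En n => δ * logpen z) := logpen_isTestFn.const_mul δ
  have hfd1 : ∀ h, fderiv ℝ (fun z => (j * pen (z - y) + δ * logpen z)
      + (u x - j * pen (x - y) - δ * logpen x)) x h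
      = j * fderiv ℝ pen (x - y) h + δ * fderiv ℝ logpen x h := by
    intro h
    rw [fderiv_add_const, fderiv_fun_add ((tp y).diff x) (tl.diff x), fp,
      fderiv_const_mul (logpen_isTestFn.diff x)]
    rfl
  have hfd2 : ∀ h, fderiv ℝ (fun z => j * pen (z - x) + (- v y - j * pen (y - x))) y h
      = - (j * fderiv ℝ pen (x - y) h) := by
    intro h
    rw [fderiv_add_const, fp]
    simp only [smul_apply, smul_eq_mul, pen_fderiv]
    rw [← neg_sub x y, inner_neg_left, norm_neg]
    ring
  obtain ⟨i1, e1⟩ := le_integral_of_touching (hFm x) (hint x) hu hA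
    (((tp y).add tl).add (IsTestFn.const (u x - j * pen (x - y) - δ * logpen x)))
    (fun z => by linarith [hmax z y]) (by ring)
  obtain ⟨i2, e2⟩ := le_integral_of_touching (hFm y) (hint y) hv.neg hB
    ((tp x).add (IsTestFn.const (- v y - j * pen (y - x))))
    (fun z => by
      have := hmax x z
      rw [hp x z, hp x y] at this
      simp only [Pi.neg_apply]
      linarith) (by simp)
  simp only [hfd1, hfd2, Pi.neg_apply] at i1 e1 i2 e2
  set μ := ν.restrict {(0 : En n)}ᶜ
  obtain ⟨q1, r1⟩ := sq_diff_integrable hK hFm hF x y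
  obtain ⟨q2, r2⟩ := sq_diff_integrable hK hFm hF x 0
  set P := ∫ z, pen (F 0 z) ∂μ
  have hX : (0 : ℝ) < 1 + ‖x‖ ^ 2 := by positivity
  have hI := integral_mono (i1.add i2)
    ((q1.const_mul j).add (((q2.div_const (1 + ‖x‖ ^ 2)).const_mul 4 |>.add
      ((hint 0).const_mul 12)).const_mul δ)) (fun z => by
        have h1 := hmax (x + F x z) (y + F y z)
        have h2 := mul_le_mul_of_nonneg_left (pen_taylor (x - y) (F x z - F y z)) hj
        have h3 := mul_le_mul_of_nonneg_left (logpen_taylor_split x (F x z) (F 0 z)) hδ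
        rw [map_sub, show x - y + (F x z - F y z) = x + F x z - (y + F y z) by abel] at h2
        simp only [Pi.add_apply]
        linarith)
  rw [integral_add' i1 i2, integral_add' (q1.const_mul j)
    (((q2.div_const (1 + ‖x‖ ^ 2)).const_mul 4 |>.add ((hint 0).const_mul 12)).const_mul δ),
    integral_const_mul, integral_const_mul,
    integral_add' ((q2.div_const (1 + ‖x‖ ^ 2)).const_mul 4) ((hint 0).const_mul 12),
    integral_const_mul, integral_const_mul, integral_div] at hI
  have r3 : (∫ z, ‖F x z - F 0 z‖ ^ 2 ∂μ) / (1 + ‖x‖ ^ 2) ≤ K := by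
    rw [div_le_iff₀ hX]
    rw [sub_zero] at r2
    nlinarith
  have r4 := mul_le_mul_of_nonneg_left r1 hj
  have r5 : δ * (4 * ((∫ z, ‖F x z - F 0 z‖ ^ 2 ∂μ) / (1 + ‖x‖ ^ 2)) + 12 * P)
      ≤ δ * (4 * K + 12 * P) := mul_le_mul_of_nonneg_left (by linarith) hδ
  have d1 : fderiv ℝ pen (x - y) (b x) - fderiv ℝ pen (x - y) (b y) ≤ β * ‖x - y‖ ^ 2 := by
    rw [← map_sub]
    refine (le_abs_self _).trans ((norm_fderiv_pen _ _).trans ?_)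
    have := hβ.norm_sub_le x y
    nlinarith [norm_nonneg (x - y)]
  have d2 := mul_le_mul_of_nonneg_left d1 hj
  have d3 : δ * fderiv ℝ logpen x (b x) ≤ δ * Mb :=
    mul_le_mul_of_nonneg_left
      ((le_abs_self _).trans ((norm_fderiv_logpen _ _).trans (hMb x))) hδ
  linarith

/-- Existence of a maximum of the doubled functional. -/
lemma exists_doubling_max {n : ℕ} {u v : En n → ℝ} (hu : Continuous u) (hv : Continuous v)
    {M : ℝ} (hMu : ∀ x, |u x| ≤ M) (hMv : ∀ x, |v x| ≤ M) {j δ : ℝ} (hj : 0 < j) (hδ : 0 < δ) :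
    ∃ x y : En n, ∀ a d, u a - v d - j * pen (a - d) - δ * logpen a
      ≤ u x - v y - j * pen (x - y) - δ * logpen x := by
  have hpc : Continuous (pen : En n → ℝ) := pen_isTestFn.1.continuous
  have hlc : Continuous (logpen : En n → ℝ) := logpen_isTestFn.1.continuous
  have hM : 0 ≤ M := (abs_nonneg _).trans (hMu 0)
  obtain ⟨p, hp⟩ := Continuous.exists_forall_ge_of_isBounded
    (f := fun p : En n × En n => u p.1 - v p.2 - j * pen (p.1 - p.2) - δ * logpen p.1)
    (by fun_prop) 0 (by
      rw [isBounded_iff_forall_norm_le]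
      refine ⟨√(Real.exp (4 * M / δ)) + √((4 * M / j) * (4 * M / j + 2)), fun p hp => ?_⟩
      simp only [Set.mem_ofPred_eq, Prod.fst_zero, Prod.snd_zero, sub_zero, pen_zero] at hp
      have hl0 : logpen (0 : En n) = 0 := by simp [logpen]
      rw [hl0] at hp
      have h1 := (abs_le.1 (hMu 0)).1
      have h2 := (abs_le.1 (hMv 0)).2
      have h3 := (abs_le.1 (hMu p.1)).2
      have h4 := (abs_le.1 (hMv p.2)).1
      have h5 := mul_nonneg hj.le (pen_nonneg (p.1 - p.2))
      have h6 := mul_nonneg hδ.le (logpen_nonneg p.1)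
      have h7 : logpen p.1 ≤ 4 * M / δ := by
        rw [le_div_iff₀ hδ]; linarith
      have h8 : pen (p.1 - p.2) ≤ 4 * M / j := by
        rw [le_div_iff₀ hj]; linarith
      have h9 : ‖p.1‖ ≤ √(Real.exp (4 * M / δ)) := by
        refine Real.le_sqrt_of_sq_le ?_
        have := Real.exp_le_exp.2 h7
        rw [logpen, Real.exp_log (by positivity)] at this
        linarith
      have h10 : ‖p.1 - p.2‖ ≤ √((4 * M / j) * (4 * M / j + 2)) := by
        refine Real.le_sqrt_of_sq_le ?_
        rw [norm_sq_eq_pen]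
        have := pen_nonneg (p.1 - p.2)
        gcongr
      have h11 : ‖p.2‖ ≤ ‖p.1‖ + ‖p.1 - p.2‖ := by
        simpa using norm_sub_le p.1 (p.1 - p.2)
      rw [Prod.norm_def]
      exact max_le (by linarith [Real.sqrt_nonneg ((4 * M / j) * (4 * M / j + 2))])
        (by linarith))
  exact ⟨p.1, p.2, fun a d => hp (a, d)⟩

/-- Comparison when `min(|F(x,·)|², |F(x,·)|)` is `ν`-integrable, i.e. when the nonlocal term
of every test function converges. -/
lemma comparison_of_integrable {n : ℕ} {ν : Measure (En n)} {F : En n → En n → En n}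
    {b : En n → En n} {K Mb : ℝ} {β : NNReal} (hK : 0 ≤ K) (hFm : ∀ x, Measurable (F x))
    (hF : ∀ x₁ x₂ : En n,
      ∫⁻ y in {(0 : En n)}ᶜ, ENNReal.ofReal (‖F x₁ y - F x₂ y‖ ^ 2) ∂ν
        ≤ ENNReal.ofReal (K * ‖x₁ - x₂‖ ^ 2))
    (hint : ∀ x, Integrable (fun y => pen (F x y)) (ν.restrict {(0 : En n)}ᶜ))
    (hMb : ∀ x, ‖b x‖ ≤ Mb) (hβ : LipschitzWith β b)
    {c f φ : En n → ℝ} (hc : Continuous c) (hf : Continuous f) (hφ : Continuous φ)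
    {c₀ : ℝ} (hc₀ : 0 < c₀) (hc_lb : ∀ x, c₀ ≤ c x)
    {u v : En n → ℝ}
    (hu : IsViscositySubsolution ν F b c f φ u)
    (hv : IsViscositySupersolution ν F b c f φ v) (x : En n) : u x ≤ v x := by
  by_contra hlt
  push Not at hlt
  obtain ⟨huc, ⟨Mu, hMu⟩, hus⟩ := hu
  obtain ⟨hvc, ⟨Mv, hMv⟩, hvs⟩ := hv
  obtain ⟨M, hM1, hM2⟩ : ∃ M, (∀ x, |u x| ≤ M) ∧ (∀ x, |v x| ≤ M) :=
    ⟨max Mu Mv, fun x => (hMu x).trans (le_max_left _ _), fun x => (hMv x).trans (le_max_right _ _)⟩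
  set P := ∫ z in {(0 : En n)}ᶜ, pen (F 0 z) ∂ν with hP
  have hP0 : 0 ≤ P := integral_nonneg fun z => pen_nonneg _
  have hMb0 : 0 ≤ Mb := (norm_nonneg _).trans (hMb 0)
  set C := Mb + 4 * K + 12 * P with hC
  have hC0 : 0 ≤ C := by positivity
  set m := (u x - v x) / 2 with hm
  have hm0 : 0 < m := by rw [hm]; linarith
  -- `δ` is chosen so that `δψ(x) ≤ m` and `δC < c₀ m`.
  obtain ⟨δ, hδ, hδ1, hδ2⟩ : ∃ δ > 0, δ * logpen x ≤ m ∧ δ * C < c₀ * m := by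
    have hl := logpen_nonneg x
    refine ⟨min (m / (logpen x + 1)) (c₀ * m / (C + 1)), by positivity, ?_, ?_⟩
    · refine (mul_le_mul_of_nonneg_right (min_le_left _ _) hl).trans ?_
      rw [div_mul_eq_mul_div, div_le_iff₀ (by positivity)]
      nlinarith
    · refine (mul_le_mul_of_nonneg_right (min_le_right _ _) hC0).trans_lt ?_
      rw [div_mul_eq_mul_div, div_lt_iff₀ (by positivity)]
      nlinarith [mul_pos hc₀ hm0]
  have hj0 : ∀ k : ℕ, (0 : ℝ) < k + 1 := fun k => by positivity
  choose X Y hXY using fun k : ℕ => exists_doubling_max huc hvc hM1 hM2 (hj0 k) hδ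
  have hval : ∀ k, m ≤ u (X k) - v (Y k) - (k + 1) * pen (X k - Y k) - δ * logpen (X k) := by
    intro k
    have := hXY k x x
    rw [sub_self, pen_zero] at this
    linarith
  have hpn : ∀ k : ℕ, 0 ≤ ((k : ℝ) + 1) * pen (X k - Y k) := fun k =>
    mul_nonneg (hj0 k).le (pen_nonneg _)
  have hln : ∀ k, 0 ≤ δ * logpen (X k) := fun k => mul_nonneg hδ.le (logpen_nonneg _)
  have huv : ∀ k, u (X k) - v (Y k) ≤ 2 * M := fun k => by
    linarith [(abs_le.1 (hM1 (X k))).2, (abs_le.1 (hM2 (Y k))).1]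
  have hXb : ∀ k, X k ∈ Metric.closedBall (0 : En n) (√(Real.exp (2 * M / δ))) := by
    intro k
    rw [mem_closedBall_zero_iff]
    refine Real.le_sqrt_of_sq_le ?_
    have h7 : logpen (X k) ≤ 2 * M / δ := by
      rw [le_div_iff₀ hδ]
      linarith [hval k, hpn k, huv k]
    have := Real.exp_le_exp.2 h7
    rw [logpen, Real.exp_log (by positivity)] at this
    linarith
  obtain ⟨a, -, σ, hσ, hXa⟩ := (isCompact_closedBall _ _).tendsto_subseq hXb
  have hpen0 : Filter.Tendsto (fun k => pen (X k - Y k)) Filter.atTop (nhds 0) := by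
    have h1 : Filter.Tendsto (fun k : ℕ => 2 * M * (1 / ((k : ℝ) + 1))) Filter.atTop (nhds 0) := by
      simpa using (tendsto_one_div_add_atTop_nhds_zero_nat (𝕜 := ℝ)).const_mul (2 * M)
    refine squeeze_zero (fun k => pen_nonneg _) (fun k => ?_) h1
    rw [mul_one_div, le_div_iff₀ (hj0 k)]
    linarith [hval k, hln k, huv k]
  have hnorm0 : Filter.Tendsto (fun k => ‖X k - Y k‖ ^ 2) Filter.atTop (nhds 0) := by
    simp_rw [norm_sq_eq_pen]
    simpa using hpen0.mul (hpen0.add_const 2)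
  have hdiff0 : Filter.Tendsto (fun k => X k - Y k) Filter.atTop (nhds 0) := by
    rw [tendsto_zero_iff_norm_tendsto_zero]
    have := hnorm0.sqrt
    simpa using this
  have hYa : Filter.Tendsto (Y ∘ σ) Filter.atTop (nhds a) := by
    have := hXa.sub (hdiff0.comp hσ.tendsto_atTop)
    simpa [Function.comp_def] using this
  have tX : ∀ {g : En n → ℝ}, Continuous g →
      Filter.Tendsto (fun k => g (X (σ k))) Filter.atTop (nhds (g a)) := fun hg =>
    (hg.tendsto a).comp hXa
  have tY : ∀ {g : En n → ℝ}, Continuous g →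
      Filter.Tendsto (fun k => g (Y (σ k))) Filter.atTop (nhds (g a)) := fun hg =>
    (hg.tendsto a).comp hYa
  have hlc : Continuous (logpen : En n → ℝ) := logpen_isTestFn.1.continuous
  -- Comparing the maximum with the value of the functional at `(a, a)`.
  have hjpen : Filter.Tendsto (fun k => ((σ k : ℝ) + 1) * pen (X (σ k) - Y (σ k)))
      Filter.atTop (nhds 0) := by
    have h1 : Filter.Tendsto (fun k => (u (X (σ k)) - v (Y (σ k)) - δ * logpen (X (σ k)))
        - (u a - v a - δ * logpen a)) Filter.atTop (nhds 0) := by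
      simpa using (((tX huc).sub (tY hvc)).sub ((tX hlc).const_mul δ)).sub_const
        (u a - v a - δ * logpen a)
    refine squeeze_zero (fun k => hpn _) (fun k => ?_) h1
    have := hXY (σ k) a a
    rw [sub_self, pen_zero] at this
    linarith
  have hjnorm : Filter.Tendsto (fun k => ((σ k : ℝ) + 1) * ‖X (σ k) - Y (σ k)‖ ^ 2)
      Filter.atTop (nhds 0) := by
    simp_rw [norm_sq_eq_pen, ← mul_assoc]
    simpa using hjpen.mul ((hpen0.comp hσ.tendsto_atTop).add_const 2)
  have hlimm : m ≤ u a - v a := by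
    refine ge_of_tendsto ((tX huc).sub (tY hvc)) (Filter.Eventually.of_forall fun k => ?_)
    linarith [hval (σ k), hpn (σ k), hln (σ k)]
  -- The supersolution property, read as a property of `-v` touched from above.
  have hsup : ∀ y w, IsTestFn w → (∀ z, - v z ≤ w z) → w y = - v y →
      -(c y * v y) + f y ≤ Lop ν F b w y ∧ φ y ≤ v y := by
    intro y w hw hle heq
    have h1 := hvs (fun z => - w z) hw.neg y (fun z => by linarith [hle z]) (by linarith)
    rw [Lop_neg, neg_neg, heq, neg_neg] at h1
    have h2 := h1.trans (min_le_left _ _)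
    have h3 := h1.trans (min_le_right _ _)
    exact ⟨by linarith, by linarith⟩
  have hobsY : ∀ k, φ (Y k) ≤ v (Y k) := by
    intro k
    refine (hsup (Y k) (fun z => (k + 1) * pen (z - X k) + (- v (Y k) - (k + 1) * pen (Y k - X k)))
      (((pen_isTestFn.comp_sub _).const_mul _).add (IsTestFn.const _)) (fun z => ?_)
      (by ring)).2
    have h1 := hXY k (X k) z
    rw [← neg_sub z, ← neg_sub (Y k) (X k), pen_neg, pen_neg] at h1
    linarith
  have hobsX : ∀ᶠ k in Filter.atTop, φ (X (σ k)) < u (X (σ k)) := by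
    have h1 : ∀ᶠ k in Filter.atTop, φ (X (σ k)) - φ (Y (σ k)) < m :=
      ((tX hφ).sub (tY hφ)).eventually_lt_const (by simpa using hm0)
    filter_upwards [h1] with k hk
    linarith [hobsY (σ k), hval (σ k), hpn (σ k), hln (σ k)]
  have hineq : ∀ᶠ k in Filter.atTop,
      (c (X (σ k)) * u (X (σ k)) - f (X (σ k))) + (-(c (Y (σ k)) * v (Y (σ k))) + f (Y (σ k)))
        ≤ (β + K) * (((σ k : ℝ) + 1) * ‖X (σ k) - Y (σ k)‖ ^ 2) + δ * C := by
    filter_upwards [hobsX] with k hk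
    refine doubling_estimate hK hFm hF hint hMb hβ huc hvc (hj0 _).le hδ.le (hXY (σ k)) ?_
      (fun w hw hle heq => (hsup _ w hw hle heq).1)
    intro w hw hle heq
    have h1 := hus w hw (X (σ k)) (fun z => by linarith [hle z]) heq
    rw [heq] at h1
    rcases min_le_iff.1 h1 with h2 | h2 <;> linarith
  have hfin := le_of_tendsto_of_tendsto
    ((((tX hc).mul (tX huc)).sub (tX hf)).add (((tY hc).mul (tY hvc)).neg.add (tY hf)))
    ((hjnorm.const_mul ((β : ℝ) + K)).add_const (δ * C)) hineq
  nlinarith [hc_lb a]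

/-! ### Divergent nonlocal term -/

/-- If the nonlocal term diverges for the penalty `g`, then at least one of `w + t g(· - x)`,
`w + 2t g(· - x)` has a non-integrable second difference at `x`. The Bochner integral of a
non-integrable function is `0`, so only the drift remains. -/
lemma exists_Lop_eq_drift {n : ℕ} {ν : Measure (En n)} {F : En n → En n → En n}
    {b : En n → En n} {x : En n}
    (hint : ¬ Integrable (fun y => pen (F x y)) (ν.restrict {(0 : En n)}ᶜ))
    {w : En n → ℝ} (hw : IsTestFn w) {t : ℝ} (ht : t ≠ 0) :
    ∃ r, (r = t ∨ r = 2 * t) ∧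
      Lop ν F b (fun z => w z + r * pen (z - x)) x = Lop 0 F b w x := by
  have hfd : ∀ r : ℝ, fderiv ℝ (fun z => w z + r * pen (z - x)) x = fderiv ℝ w x := by
    intro r
    rw [fderiv_fun_add (hw.diff x) (((pen_isTestFn.comp_sub x).const_mul r).diff x),
      fderiv_const_mul ((pen_isTestFn.comp_sub x).diff x), fderiv_comp_sub, sub_self,
      pen_fderiv_zero, smul_zero, add_zero]
  have key : ∀ r : ℝ, ¬ Integrable (fun y => w (x + F x y) + r * pen (x + F x y - x)
      - (w x + r * pen (x - x)) - fderiv ℝ w x (F x y)) (ν.restrict {(0 : En n)}ᶜ) →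
      Lop ν F b (fun z => w z + r * pen (z - x)) x = Lop 0 F b w x := by
    intro r hr
    rw [Lop_eq, Lop_eq, hfd, integral_undef hr]
    simp
  by_contra hcon
  push Not at hcon
  have h1 := by_contra fun h => hcon t (Or.inl rfl) (key t h)
  have h2 := by_contra fun h => hcon (2 * t) (Or.inr rfl) (key (2 * t) h)
  refine hint (((h2.sub h1).const_mul t⁻¹).congr (Filter.Eventually.of_forall fun y => ?_))
  simp only [Pi.sub_apply, add_sub_cancel_left, sub_self, pen_zero]
  field_simp
  ring

/-- When the nonlocal term diverges for the penalty `g`, subsolutions are subsolutions of the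
first-order problem. -/
lemma IsViscositySubsolution.of_not_integrable {n : ℕ} {ν : Measure (En n)}
    {F : En n → En n → En n} {b : En n → En n} {c f φ u : En n → ℝ}
    (hint : ∀ x, ¬ Integrable (fun y => pen (F x y)) (ν.restrict {(0 : En n)}ᶜ))
    (hu : IsViscositySubsolution ν F b c f φ u) : IsViscositySubsolution 0 F b c f φ u := by
  refine ⟨hu.1, hu.2.1, fun w hw x hmax heq => ?_⟩
  obtain ⟨r, hr, hL⟩ := exists_Lop_eq_drift (b := b) (hint x) hw (one_ne_zero (α := ℝ))
  have hr0 : 0 ≤ r := by rcases hr with rfl | rfl <;> norm_num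
  have := hu.2.2 _ (hw.add ((pen_isTestFn.comp_sub x).const_mul r)) x
    (fun z => by
      have h1 := mul_nonneg hr0 (pen_nonneg (z - x))
      rw [sub_self, pen_zero]
      linarith [hmax z]) (by rw [sub_self, pen_zero, mul_zero, add_zero, heq])
  rw [hL] at this
  simpa only [sub_self, pen_zero, mul_zero, add_zero] using this

/-- When the nonlocal term diverges for the penalty `g`, supersolutions are supersolutions of the
first-order problem. -/
lemma IsViscositySupersolution.of_not_integrable {n : ℕ} {ν : Measure (En n)}
    {F : En n → En n → En n} {b : En n → En n} {c f φ v : En n → ℝ}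
    (hint : ∀ x, ¬ Integrable (fun y => pen (F x y)) (ν.restrict {(0 : En n)}ᶜ))
    (hv : IsViscositySupersolution ν F b c f φ v) :
    IsViscositySupersolution 0 F b c f φ v := by
  refine ⟨hv.1, hv.2.1, fun w hw x hmin heq => ?_⟩
  obtain ⟨r, hr, hL⟩ := exists_Lop_eq_drift (b := b) (hint x) hw
    (neg_ne_zero.2 (one_ne_zero (α := ℝ)))
  have hr0 : r ≤ 0 := by rcases hr with rfl | rfl <;> norm_num
  have := hv.2.2 _ (hw.add ((pen_isTestFn.comp_sub x).const_mul r)) x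
    (fun z => by
      have h1 := mul_nonneg (neg_nonneg.2 hr0) (pen_nonneg (z - x))
      rw [sub_self, pen_zero]
      linarith [hmin z]) (by rw [sub_self, pen_zero, mul_zero, add_zero, heq])
  rw [hL] at this
  simpa only [sub_self, pen_zero, mul_zero, add_zero] using this

end

/-- Comparison principle for the stationary obstacle problem: under Assumption (Coefficients),
with `c, f, φ` continuous, `c ≥ c₀ > 0`, and `lim_{y→0} F(x,y) = 0`, any bounded viscosity
subsolution `u` lies below any bounded viscosity supersolution `v`. -/
theorem comparison_principle_stationary
    (n : ℕ) (ν : Measure (En n)) [SigmaFinite ν]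
    (F : En n → En n → En n) (b : En n → En n) (ρ : En n → ℝ) (K : ℝ)
    (hcoeff : CoefficientsAssumption ν F b ρ K)
    (c f φ : En n → ℝ) (hc : Continuous c) (hf : Continuous f) (hφ : Continuous φ)
    (c₀ : ℝ) (hc₀ : 0 < c₀) (hc_lb : ∀ x, c₀ ≤ c x)
    (hFlim : ∀ x : En n,
      Filter.Tendsto (F x) (nhdsWithin 0 {(0 : En n)}ᶜ) (nhds 0))
    (u v : En n → ℝ)
    (hu : IsViscositySubsolution ν F b c f φ u)
    (hv : IsViscositySupersolution ν F b c f φ v) :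
    ∀ x : En n, u x ≤ v x := by
  obtain ⟨hK, hFm, -, -, hF, -, -, ⟨Mb, hMb⟩, ⟨β, hβ⟩⟩ := hcoeff
  have hFx : ∀ x, Measurable (F x) := fun x => hFm.of_uncurry_left
  by_cases h : ∃ x₁, Integrable (fun y => pen (F x₁ y)) (ν.restrict {(0 : En n)}ᶜ)
  · obtain ⟨x₁, hx₁⟩ := h
    refine comparison_of_integrable hK.le hFx hF (fun x => ?_) hMb hβ hc hf hφ hc₀ hc_lb hu hv
    have hpm : Measurable (pen : En n → ℝ) := pen_isTestFn.1.continuous.measurable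
    refine ((hx₁.const_mul 12).add
      ((sq_diff_integrable hK.le hFx hF x x₁).1.const_mul 4)).mono'
      (hpm.comp (hFx x)).aestronglyMeasurable (Filter.Eventually.of_forall fun y => ?_)
    rw [Real.norm_of_nonneg (pen_nonneg _)]
    simpa using pen_add_le (F x₁ y) (F x y - F x₁ y)
  · push Not at h
    exact comparison_of_integrable hK.le hFx (fun _ _ => by simp) (fun _ => by simp)
      hMb hβ hc hf hφ hc₀ hc_lb (hu.of_not_integrable h) (hv.of_not_integrable h)

end
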